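/- Let r ≥ 4 and let p > 3 be prime, and let V be a quasi-Hermitian variety of PG(r,p^4) whose characteristic vector v^V belongs to C_p. If π is a plane of PG(r,p^4) with |π ∩ V| ≥ p^8 - p^5 + p^4 - p + 1, then either π is entirely contained in V, or |π ∩ V| = p^8 - p^5 + p^4 + 1 and every line of π meets π ∩ V in exactly 1, p^4 - p + 1, or p^4 + 1 points. -/

import Mathlib

/-!
Common framework: `ProjPoint F n` is the set of points of the projective space
PG(n-1, |F|) (so PG(r, q²) corresponds to `n = r + 1` and `Fintype.card F = q ^ 2`).
Projective subspaces of projective dimension `k` are the submodules of `Fin n → F`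
of `finrank` equal to `k + 1`; lines have finrank 2, planes finrank 3 and
hyperplanes finrank `n - 1 = r`.
-/

open Module Matrix

/-- The points of the projective space PG(n-1, |F|): one-dimensional subspaces
of `F^n`. -/
def ProjPoint (F : Type) [Field F] (n : ℕ) : Type :=
  {W : Submodule F (Fin n → F) // finrank F W = 1}

/-- The set of projective points lying in a given subspace `W`. -/
def pointsIn (F : Type) [Field F] (n : ℕ) (W : Submodule F (Fin n → F)) :
    Set (ProjPoint F n) :=
  {P | P.1 ≤ W}

/-- The number of points of `V` lying in the subspace `W`. -/
noncomputable def secant (F : Type) [Field F] (n : ℕ) (V : Set (ProjPoint F n))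
    (W : Submodule F (Fin n → F)) : ℕ :=
  (V ∩ pointsIn F n W).ncard

/-- The characteristic vector of a set of projective points, with values in `F_p`. -/
noncomputable def charVec (F : Type) [Field F] (p n : ℕ) (S : Set (ProjPoint F n)) :
    ProjPoint F n → ZMod p :=
  Set.indicator S 1

/-- `C_p`: the `F_p`-code spanned by the characteristic vectors of hyperplanes. -/
def hypCode (F : Type) [Field F] (p n : ℕ) :
    Submodule (ZMod p) (ProjPoint F n → ZMod p) :=
  Submodule.span (ZMod p)
    {v | ∃ H : Submodule F (Fin n → F), finrank F H = n - 1 ∧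
      v = charVec F p n (pointsIn F n H)}

/-- A quasi-Hermitian variety of PG(r, q²): it has the size of a non-singular
Hermitian variety and the same two intersection numbers with hyperplanes.
(All identities are stated multiplied through by `q² - 1`.) -/
def IsQuasiHermitian (F : Type) [Field F] (q r : ℕ)
    (V : Set (ProjPoint F (r + 1))) : Prop :=
  (V.ncard : ℤ) * ((q : ℤ) ^ 2 - 1)
      = ((q : ℤ) ^ (r + 1) + (-1) ^ r) * ((q : ℤ) ^ r - (-1) ^ r) ∧
  ∀ H : Submodule F (Fin (r + 1) → F), finrank F H = r →
    ((secant F (r + 1) V H : ℤ) * ((q : ℤ) ^ 2 - 1)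
        = ((q : ℤ) ^ r + (-1) ^ (r - 1)) * ((q : ℤ) ^ (r - 1) - (-1) ^ (r - 1)) ∨
     (secant F (r + 1) V H : ℤ) * ((q : ℤ) ^ 2 - 1)
        = ((q : ℤ) ^ 2 - 1)
          + (q : ℤ) ^ 2 * (((q : ℤ) ^ (r - 1) + (-1) ^ r) * ((q : ℤ) ^ (r - 2) - (-1) ^ r)))

/-- The zero set, in PG(n-1,|F|), of the Hermitian form `x ↦ xᵀ A x^(q)`. -/
def hermSet (F : Type) [Field F] (q n : ℕ) (A : Matrix (Fin n) (Fin n) F) :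
    Set (ProjPoint F n) :=
  {P | ∀ x ∈ P.1, ∑ i, ∑ j, x i * A i j * (x j) ^ q = 0}

/-- A non-singular Hermitian variety of PG(n-1, q²). -/
def IsNonsingHermitian (F : Type) [Field F] (q n : ℕ)
    (V : Set (ProjPoint F n)) : Prop :=
  ∃ A : Matrix (Fin n) (Fin n) F, IsUnit A.det ∧
    Aᵀ = A.map (fun a => a ^ q) ∧ V = hermSet F q n A

/-- A singular Hermitian variety of PG(n-1, q²) whose singular space (the radical
of the Hermitian form) has projective dimension `d`. -/
def IsSingularHermitian (F : Type) [Field F] (q n d : ℕ)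
    (S : Set (ProjPoint F n)) : Prop :=
  ∃ A : Matrix (Fin n) (Fin n) F,
    Aᵀ = A.map (fun a => a ^ q) ∧
    finrank F (LinearMap.ker (Matrix.toLin' Aᵀ)) = d + 1 ∧
    S = hermSet F q n A

/-- A `d`-singular quasi-Hermitian variety of PG(r, q²). -/
def IsSingularQuasiHermitian (F : Type) [Field F] (q r d : ℕ)
    (S : Set (ProjPoint F (r + 1))) : Prop :=
  ∃ S₀ : Set (ProjPoint F (r + 1)), IsSingularHermitian F q (r + 1) d S₀ ∧
    S.ncard = S₀.ncard ∧
    ∀ H : Submodule F (Fin (r + 1) → F), finrank F H = r →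
      ∃ H₀ : Submodule F (Fin (r + 1) → F), finrank F H₀ = r ∧
        secant F (r + 1) S H = secant F (r + 1) S₀ H₀

/-- `U` is a classical unital (Hermitian curve) of the plane `π` of PG(n-1, q²):
in some coordinatization `e` of `π`, it is the zero set of a non-degenerate
Hermitian form on `F³`. -/
def IsClassicalUnital (F : Type) [Field F] (q n : ℕ)
    (π : Submodule F (Fin n → F)) (U : Set (ProjPoint F n)) : Prop :=
  ∃ e : (Fin 3 → F) →ₗ[F] (Fin n → F), LinearMap.ker e = ⊥ ∧ LinearMap.range e = π ∧
    ∃ A : Matrix (Fin 3) (Fin 3) F, IsUnit A.det ∧ Aᵀ = A.map (fun a => a ^ q) ∧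
      U = {P | ∃ y : Fin 3 → F, y ≠ 0 ∧ P.1 = Submodule.span F {e y} ∧
        ∑ i, ∑ j, y i * A i j * (y j) ^ q = 0}

section keylemma
open Polynomial

lemma det_dvd_of_rank {F : Type*} [Field F] {s m : ℕ} (M : Matrix (Fin s) (Fin s) F[X]) (a : F)
    (hm : (M.map (Polynomial.eval a)).rank ≤ m) : (X - C a) ^ (s - m) ∣ M.det := by
  classical
  obtain ⟨L, L', D, h⟩ :=
    Matrix.Pivot.exists_list_transvec_mul_mul_list_transvec_eq_diagonal (M.map (Polynomial.eval a))
  set A := (L.map Matrix.TransvectionStruct.toMatrix).prod with hA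
  set B := (L'.map Matrix.TransvectionStruct.toMatrix).prod with hB
  have dA : A.det = 1 := Matrix.TransvectionStruct.det_toMatrix_prod L
  have dB : B.det = 1 := Matrix.TransvectionStruct.det_toMatrix_prod L'
  set N := A.map C * M * B.map C with hN
  have dN : N.det = M.det := by
    have h1 : (A.map C).det = 1 := by
      have := (C : F →+* F[X]).map_det A
      rw [dA, map_one] at this
      exact this.symm
    have h2 : (B.map C).det = 1 := by
      have := (C : F →+* F[X]).map_det B
      rw [dB, map_one] at this
      exact this.symm
    rw [hN, det_mul, det_mul, h1, h2]; simp
  have evN : N.map (Polynomial.eval a) = diagonal D := by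
    rw [← h, hN]
    have : ∀ K : Matrix (Fin s) (Fin s) F[X], K.map (Polynomial.eval a) =
      (Polynomial.evalRingHom a).mapMatrix K := fun K => rfl
    rw [this, map_mul, map_mul]
    congr 1
    · congr 1
      ext i j; simp
    · ext i j; simp
  have rk : (diagonal D).rank ≤ m := by
    rw [← h, rank_mul_eq_left_of_isUnit_det _ _ (by rw [dB]; exact isUnit_one),
      rank_mul_eq_right_of_isUnit_det _ _ (by rw [dA]; exact isUnit_one)]
    exact hm
  rw [rank_diagonal] at rk
  -- rows with D i = 0 are divisible
  have row : ∀ i j, (if D i = 0 then (X - C a) else 1) ∣ N i j := by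
    intro i j
    split_ifs with hi
    · rw [Polynomial.dvd_iff_isRoot]
      have := congrFun (congrFun evN i) j
      simp only [map_apply, diagonal_apply] at this
      rw [IsRoot.def, this]; split_ifs <;> simp [hi]
    · exact one_dvd _
  choose K hK using row
  have : N = of fun i j => (if D i = 0 then (X - C a) else 1) * (of K) i j := by
    ext1 i j; rw [hK]; simp
  rw [← dN, this, det_mul_column]
  refine Dvd.dvd.mul_right ?_ _
  rw [Finset.prod_ite]
  simp only [Finset.prod_const, one_pow, mul_one]
  apply pow_dvd_pow
  have := Finset.card_filter_add_card_filter_not (s := (Finset.univ : Finset (Fin s))) (fun i => D i = 0)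
  rw [Fintype.card_subtype] at rk
  simp at this rk ⊢
  omega

lemma natDegree_det_le' {F : Type*} [Field F] {s : ℕ} (M : Matrix (Fin s) (Fin s) F[X])
    (h : ∀ i j, (M i j).natDegree ≤ (i : ℕ) + j) : M.det.natDegree ≤ s * (s - 1) := by
  rw [det_apply]
  refine Polynomial.natDegree_sum_le_of_forall_le _ _ fun σ _ => ?_
  refine (natDegree_smul_le _ _).trans ?_
  refine (natDegree_prod_le _ _).trans ?_
  refine (Finset.sum_le_sum fun i _ => h _ _).trans ?_
  rw [Finset.sum_add_distrib, Equiv.sum_comp σ (fun i : Fin s => (i : ℕ)), ← two_mul, mul_comm,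
    Fin.sum_univ_eq_sum_range (fun i => i), Finset.sum_range_id_mul_two]

lemma key_lemma {F : Type*} [Field F] [Fintype F] [DecidableEq F] (c : F → F → F) (s : ℕ)
    (hc : ∀ k < Fintype.card F - 1, ∃ S : F[X], S.natDegree ≤ k ∧
      ∀ x, ∑ y, c x y * y ^ k = S.eval x)
    (hs : (Finset.univ.filter fun y => c 0 y ≠ 0).card = s)
    (h2 : 2 * s ≤ Fintype.card F) :
    Fintype.card F * s ≤
      (∑ x, (Finset.univ.filter fun y => c x y ≠ 0).card) + s * (s - 1) := by
  classical
  have hk : ∀ i j : Fin s, (i : ℕ) + j < Fintype.card F - 1 := by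
    intro i j; omega
  choose S hS using fun i j : Fin s => hc _ (hk i j)
  set M : Matrix (Fin s) (Fin s) F[X] := of S with hM
  have ev : ∀ x, M.map (Polynomial.eval x) =
      (of fun (i : Fin s) (y : {y // c x y ≠ 0}) => c x y * (y : F) ^ (i : ℕ)) *
      (of fun (y : {y // c x y ≠ 0}) (j : Fin s) => (y : F) ^ (j : ℕ)) := by
    intro x
    ext i j
    simp only [hM, map_apply, of_apply, mul_apply]
    rw [← (hS i j).2 x]
    rw [← Finset.sum_subtype (Finset.univ.filter fun y => c x y ≠ 0) (p := fun y => c x y ≠ 0)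
      (by simp) (fun y => c x y * y ^ (i : ℕ) * y ^ (j : ℕ)), Finset.sum_filter]
    refine Finset.sum_congr rfl fun y _ => ?_
    split_ifs with hy
    · ring
    · rw [not_not.mp hy, zero_mul]
  have rk : ∀ x, (M.map (Polynomial.eval x)).rank ≤
      (Finset.univ.filter fun y => c x y ≠ 0).card := by
    intro x
    rw [ev x]
    refine (rank_mul_le_left _ _).trans ((rank_le_card_width _).trans ?_)
    rw [Fintype.card_subtype]
  have dvd := fun x => det_dvd_of_rank M x (rk x)
  have ne : M.det ≠ 0 := by
    intro h0
    have h1 : (M.map (Polynomial.eval 0)).det = 0 := by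
      have := (Polynomial.evalRingHom (0 : F)).map_det M
      rw [h0, map_zero] at this
      exact this.symm
    let e : Fin s ≃ {y // c 0 y ≠ 0} := Fintype.equivOfCardEq (by
      rw [Fintype.card_fin, Fintype.card_subtype, hs])
    have h3 : M.map (Polynomial.eval 0) =
        (vandermonde fun i => ((e i : F)))ᵀ * (diagonal fun i => c 0 (e i)) *
          (vandermonde fun i => ((e i : F))) := by
      rw [ev 0]
      ext i j
      rw [mul_apply, mul_apply, ← Equiv.sum_comp e]
      refine Finset.sum_congr rfl fun k _ => ?_
      simp [vandermonde, mul_comm]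
    have hV : (vandermonde fun i => ((e i : F))).det ≠ 0 := by
      rw [det_vandermonde_ne_zero_iff]
      exact Subtype.val_injective.comp e.injective
    rw [h3, det_mul, det_mul, det_transpose, det_diagonal] at h1
    refine mul_ne_zero (mul_ne_zero hV (Finset.prod_ne_zero_iff.mpr fun i _ => (e i).2)) hV h1
  have dvd2 : ∏ x : F, (X - C x) ^ (s - (Finset.univ.filter fun y => c x y ≠ 0).card) ∣ M.det := by
    refine Finset.prod_dvd_of_coprime ?_ fun x _ => dvd x
    intro x _ y _ hxy
    exact ((pairwise_coprime_X_sub_C (fun a b h => h) : Pairwise (Function.onFun _ fun i : F => X - C i)) hxy).pow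
  have deg := natDegree_le_of_dvd dvd2 ne
  have deg2 := natDegree_det_le' M (fun i j => (hS i j).1)
  rw [natDegree_prod _ _ (fun x _ => pow_ne_zero _ (X_sub_C_ne_zero x))] at deg
  simp only [natDegree_pow, natDegree_X_sub_C, mul_one] at deg
  have : Fintype.card F * s ≤ ∑ x : F, ((s - (Finset.univ.filter fun y => c x y ≠ 0).card)
      + (Finset.univ.filter fun y => c x y ≠ 0).card) := by
    rw [← smul_eq_mul, ← Finset.card_univ, ← Finset.sum_const]
    exact Finset.sum_le_sum fun x _ => by omega
  rw [Finset.sum_add_distrib] at this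
  omega

end keylemma
section geometry
set_option linter.unusedSectionVars false
open Submodule

variable {F : Type} [Field F] {r : ℕ}

/-- The point spanned by a vector (junk for the zero vector). -/
noncomputable def pt (v : Fin (r + 1) → F) : ProjPoint F (r + 1) :=
  open Classical in
  if h : v = 0 then ⟨span F {(1 : Fin (r + 1) → F)}, finrank_span_singleton one_ne_zero⟩
  else ⟨span F {v}, finrank_span_singleton h⟩

lemma pt_val {v : Fin (r + 1) → F} (hv : v ≠ 0) : (pt v).1 = span F {v} := by
  simp [pt, hv]

lemma pt_mem {v : Fin (r + 1) → F} (hv : v ≠ 0) (W : Submodule F (Fin (r + 1) → F)) :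
    pt v ∈ pointsIn F (r + 1) W ↔ v ∈ W := by
  simp only [pointsIn, Set.mem_ofPred_eq]
  rw [pt_val hv, span_singleton_le_iff_mem]

lemma exists_pt (P : ProjPoint F (r + 1)) : ∃ v, v ≠ 0 ∧ P = pt v := by
  obtain ⟨⟨v, hvP⟩, hv, hs⟩ := finrank_eq_one_iff'.mp P.2
  have hv0 : v ≠ 0 := fun h => hv (Subtype.ext h)
  refine ⟨v, hv0, Subtype.ext ?_⟩
  rw [pt_val hv0]
  apply le_antisymm
  · intro w hw
    obtain ⟨c, hc⟩ := hs ⟨w, hw⟩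
    exact mem_span_singleton.mpr ⟨c, congrArg Subtype.val hc⟩
  · rwa [span_singleton_le_iff_mem]

lemma pt_eq {v w : Fin (r + 1) → F} (hv : v ≠ 0) (hw : w ≠ 0) :
    pt v = pt w ↔ ∃ a : F, a • w = v := by
  constructor
  · intro h
    have h1 := congrArg Subtype.val h
    rw [pt_val hv, pt_val hw] at h1
    have : v ∈ span F {w} := h1 ▸ mem_span_singleton_self v
    exact mem_span_singleton.mp this
  · rintro ⟨a, rfl⟩
    have ha : a ≠ 0 := by rintro rfl; simp at hv
    apply Subtype.ext
    rw [pt_val hv, pt_val hw]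
    exact span_singleton_smul_eq (IsUnit.mk0 a ha) w

variable [Fintype F]

instance : Finite (ProjPoint F (r + 1)) := by
  unfold ProjPoint
  have : Finite (Submodule F (Fin (r + 1) → F)) :=
    Finite.of_injective (fun W => (W : Set (Fin (r + 1) → F))) SetLike.coe_injective
  infer_instance

lemma add_ne {W₀ : Submodule F (Fin (r + 1) → F)} {e w : Fin (r + 1) → F} (he : e ∉ W₀)
    (hw : w ∈ W₀) : e + w ≠ 0 := by
  intro h
  apply he
  rw [eq_neg_of_add_eq_zero_left h]
  exact W₀.neg_mem hw

lemma add_notMem {W₀ : Submodule F (Fin (r + 1) → F)} {e w : Fin (r + 1) → F} (he : e ∉ W₀)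
    (hw : w ∈ W₀) : e + w ∉ W₀ := fun h => he ((W₀.add_mem_iff_left hw).mp h)

lemma secant_sup (S : Set (ProjPoint F (r + 1))) (W₀ : Submodule F (Fin (r + 1) → F))
    (e : Fin (r + 1) → F) (he : e ∉ W₀) :
    secant F (r + 1) S (W₀ ⊔ span F {e}) =
      secant F (r + 1) S W₀ + {w : W₀ | pt (e + (w : Fin (r + 1) → F)) ∈ S}.ncard := by
  have inj : Function.Injective (fun w : W₀ => pt (e + (w : Fin (r + 1) → F))) := by
    intro w w' h
    obtain ⟨a, ha⟩ := (pt_eq (add_ne he w.2) (add_ne he w'.2)).mp h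
    have h1 : (1 - a) • e ∈ W₀ := by
      have : (1 - a) • e = a • (w' : Fin (r + 1) → F) - w := by
        rw [sub_smul, one_smul, sub_eq_sub_iff_add_eq_add, ← ha, smul_add]; abel
      rw [this]
      exact W₀.sub_mem (W₀.smul_mem _ w'.2) w.2
    have h2 : 1 - a = 0 := by
      by_contra h0
      exact he ((W₀.smul_mem_iff h0).mp h1)
    have h3 : a = 1 := (sub_eq_zero.mp h2).symm
    rw [h3, one_smul] at ha
    exact Subtype.ext (add_left_cancel ha).symm
  unfold secant
  rw [← Set.ncard_image_of_injective _ inj, ← Set.ncard_union_eq]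
  · congr 1
    ext P
    obtain ⟨v, hv, rfl⟩ := exists_pt P
    simp only [Set.mem_inter_iff, Set.mem_union, Set.mem_image, Set.mem_ofPred_eq, pt_mem hv]
    constructor
    · rintro ⟨hS, hW⟩
      by_cases h0 : v ∈ W₀
      · exact Or.inl ⟨hS, h0⟩
      · obtain ⟨w, hw, z, hz, rfl⟩ := mem_sup.mp hW
        obtain ⟨a, rfl⟩ := mem_span_singleton.mp hz
        have ha : a ≠ 0 := by rintro rfl; simp [hw] at h0
        have h1 : pt (e + a⁻¹ • w) = pt (w + a • e) := by
          rw [pt_eq (add_ne he (W₀.smul_mem _ hw)) hv]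
          refine ⟨a⁻¹, ?_⟩
          rw [smul_add, smul_smul, inv_mul_cancel₀ ha, one_smul]; exact add_comm _ _
        exact Or.inr ⟨⟨a⁻¹ • w, W₀.smul_mem _ hw⟩, by simpa [h1] using hS, h1⟩
    · rintro (⟨hS, h0⟩ | ⟨w, hw, h⟩)
      · exact ⟨hS, mem_sup_left h0⟩
      · rw [← h]
        refine ⟨hw, ?_⟩
        rw [← pt_mem hv, ← h, pt_mem (add_ne he w.2)]
        exact add_mem (mem_sup_right (mem_span_singleton_self e)) (mem_sup_left w.2)
  · rw [Set.disjoint_left]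
    rintro P ⟨_, hP⟩ ⟨w, _, rfl⟩
    rw [pt_mem (add_ne he w.2)] at hP
    exact add_notMem he w.2 hP

lemma secant_span (S : Set (ProjPoint F (r + 1))) [DecidablePred (· ∈ S)] {g : Fin (r + 1) → F}
    (hg : g ≠ 0) :
    secant F (r + 1) S (span F {g}) = if pt g ∈ S then 1 else 0 := by
  have : pointsIn F (r + 1) (span F {g}) = {pt g} := by
    ext P
    obtain ⟨v, hv, rfl⟩ := exists_pt P
    rw [pt_mem hv, Set.mem_singleton_iff, pt_eq hv hg, mem_span_singleton]
  unfold secant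
  rw [this]
  split_ifs with h
  · rw [Set.inter_eq_self_of_subset_right (by simpa using h)]; simp
  · rw [Set.inter_singleton_eq_empty.mpr h]; simp

lemma secant_line (S : Set (ProjPoint F (r + 1))) [DecidablePred (· ∈ S)]
    {f g : Fin (r + 1) → F} (hg : g ≠ 0) (hf : f ∉ span F {g}) :
    secant F (r + 1) S (span F {g} ⊔ span F {f}) =
      (if pt g ∈ S then 1 else 0) + (Finset.univ.filter fun y : F => pt (f + y • g) ∈ S).card := by
  rw [secant_sup S _ _ hf, secant_span S hg]
  congr 1
  rw [← Set.ncard_coe_finset]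
  let φ : F → span F {g} := fun y => ⟨y • g, mem_span_singleton.mpr ⟨y, rfl⟩⟩
  have hφ : Function.Injective φ := fun a b h =>
    smul_left_injective F hg (congrArg Subtype.val h)
  rw [← Set.ncard_image_of_injective _ hφ]
  congr 1
  ext ⟨w, hw⟩
  obtain ⟨y, rfl⟩ := mem_span_singleton.mp hw
  simp only [Set.mem_ofPred_eq, Finset.coe_filter, Finset.mem_univ, true_and, Set.mem_image]
  constructor
  · intro h; exact ⟨y, h, rfl⟩
  · rintro ⟨y', h, h'⟩
    have : y' • g = y • g := congrArg Subtype.val h'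
    rw [← this]
    exact h

lemma secant_plane (S : Set (ProjPoint F (r + 1))) [DecidablePred (· ∈ S)]
    {e₀ e₁ e₂ : Fin (r + 1) → F} (h2 : e₂ ≠ 0) (h1 : e₁ ∉ span F {e₂})
    (h0 : e₀ ∉ span F {e₂} ⊔ span F {e₁}) :
    secant F (r + 1) S (span F {e₂} ⊔ span F {e₁} ⊔ span F {e₀}) =
      secant F (r + 1) S (span F {e₂} ⊔ span F {e₁}) +
        ∑ x : F, (Finset.univ.filter fun y : F => pt (e₀ + x • e₁ + y • e₂) ∈ S).card := by
  rw [secant_sup S _ _ h0]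
  congr 1
  classical
  have : ∑ x : F, (Finset.univ.filter fun y : F => pt (e₀ + x • e₁ + y • e₂) ∈ S).card =
      (Finset.univ.filter fun z : F × F => pt (e₀ + z.1 • e₁ + z.2 • e₂) ∈ S).card := by
    simp only [Finset.card_filter]
    rw [Fintype.sum_prod_type]
  rw [this, ← Set.ncard_coe_finset]
  let φ : F × F → (span F {e₂} ⊔ span F {e₁} : Submodule F _) := fun z =>
    ⟨z.1 • e₁ + z.2 • e₂, add_mem (mem_sup_right (mem_span_singleton.mpr ⟨_, rfl⟩))
      (mem_sup_left (mem_span_singleton.mpr ⟨_, rfl⟩))⟩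
  have hφ : Function.Injective φ := by
    rintro ⟨x, y⟩ ⟨x', y'⟩ h
    have h : x • e₁ + y • e₂ = x' • e₁ + y' • e₂ := congrArg Subtype.val h
    have hx : (x - x') • e₁ = (y' - y) • e₂ := by
      rw [sub_smul, sub_smul, sub_eq_sub_iff_add_eq_add, h]; abel
    have hxx : x - x' = 0 := by
      by_contra hne
      apply h1
      rw [← (span F {e₂}).smul_mem_iff hne, hx]
      exact mem_span_singleton.mpr ⟨_, rfl⟩
    rw [hxx, zero_smul] at hx
    have := (smul_eq_zero.mp hx.symm).resolve_right h2
    rw [sub_eq_zero] at this hxx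
    rw [this, hxx]
  rw [← Set.ncard_image_of_injective _ hφ]
  congr 1
  ext ⟨w, hw⟩
  obtain ⟨w1, hw1, w2, hw2, rfl⟩ := mem_sup.mp hw
  obtain ⟨y, rfl⟩ := mem_span_singleton.mp hw1
  obtain ⟨x, rfl⟩ := mem_span_singleton.mp hw2
  simp only [Set.mem_ofPred_eq, Finset.coe_filter, Finset.mem_univ, true_and, Set.mem_image]
  constructor
  · intro h
    refine ⟨(x, y), ?_, Subtype.ext (add_comm _ _)⟩
    simp only [add_assoc]
    rwa [add_comm (x • e₁)]
  · rintro ⟨⟨x', y'⟩, h, h'⟩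
    have : x' • e₁ + y' • e₂ = y • e₂ + x • e₁ := congrArg Subtype.val h'
    rw [← this, ← add_assoc]
    exact h

lemma secant_add_compl (S : Set (ProjPoint F (r + 1))) (W : Submodule F (Fin (r + 1) → F)) :
    secant F (r + 1) S W + secant F (r + 1) Sᶜ W = secant F (r + 1) Set.univ W := by
  unfold secant
  rw [← Set.ncard_union_eq _ (Set.toFinite _) (Set.toFinite _)]
  · congr 1
    rw [← Set.union_inter_distrib_right, Set.union_compl_self]
  · exact Disjoint.mono Set.inter_subset_left Set.inter_subset_left disjoint_compl_right

lemma exists_notMem_of_finrank_lt {W₀ W : Submodule F (Fin (r + 1) → F)}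
    (h : finrank F W₀ < finrank F W) : ∃ e ∈ W, e ∉ W₀ := by
  by_contra hc
  push Not at hc
  exact absurd (Submodule.finrank_mono (show W ≤ W₀ from hc)) (by omega)

lemma sup_eq_of_finrank {W₀ W : Submodule F (Fin (r + 1) → F)} {e : Fin (r + 1) → F}
    (hle : W₀ ≤ W) (he : e ∈ W) (he' : e ∉ W₀) (h : finrank F W = finrank F W₀ + 1) :
    W₀ ⊔ span F {e} = W := by
  apply Submodule.eq_of_le_of_finrank_eq
  · exact sup_le hle ((span_singleton_le_iff_mem _ _).mpr he)
  · rw [finrank_sup_span_singleton he', h]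

lemma card_points_mod {p : ℕ} [CharP F p] (hp : p ∣ Fintype.card F) (d : ℕ) :
    ∀ (W₀ W : Submodule F (Fin (r + 1) → F)), W₀ ≤ W → 1 ≤ finrank F W₀ →
    finrank F W = finrank F W₀ + d → (secant F (r + 1) Set.univ W₀ : ZMod p) = 1 →
    (secant F (r + 1) Set.univ W : ZMod p) = 1 := by
  induction d with
  | zero =>
    intro W₀ W hle _ hd h
    rwa [← Submodule.eq_of_le_of_finrank_eq hle hd.symm]
  | succ d ih =>
    intro W₀ W hle h1 hd h
    obtain ⟨e, he, he'⟩ := exists_notMem_of_finrank_lt (W₀ := W₀) (W := W) (by omega)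
    refine ih (W₀ ⊔ span F {e}) W (sup_le hle ((span_singleton_le_iff_mem _ _).mpr he)) ?_ ?_ ?_
    · rw [finrank_sup_span_singleton he']; omega
    · rw [finrank_sup_span_singleton he']; omega
    · rw [secant_sup _ _ _ he', Nat.cast_add, h]
      simp only [Set.mem_univ, Set.ofPred_true, Set.ncard_univ]
      rw [Module.natCard_eq_pow_finrank (K := F), Nat.card_eq_fintype_card]
      rw [(ZMod.natCast_eq_zero_iff _ _).mpr (dvd_pow hp (by omega)), add_zero]

lemma card_points_mod' {p : ℕ} [CharP F p] (hp : p ∣ Fintype.card F)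
    (W : Submodule F (Fin (r + 1) → F)) (h : 1 ≤ finrank F W) :
    (secant F (r + 1) Set.univ W : ZMod p) = 1 := by
  classical
  obtain ⟨e, he, he'⟩ := exists_notMem_of_finrank_lt (W₀ := ⊥) (W := W) (by simp; omega)
  have he0 : e ≠ 0 := by simpa using he'
  have h1 : finrank F (span F {e}) = 1 := finrank_span_singleton he0
  refine card_points_mod hp (finrank F W - 1) (span F {e}) W
    ((span_singleton_le_iff_mem _ _).mpr he) (by omega) (by omega) ?_
  rw [secant_span _ he0]; simp

lemma code_const {p : ℕ} [CharP F p] (hp : p ∣ Fintype.card F)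
    (c : ProjPoint F (r + 1) → ZMod p) (hc : c ∈ hypCode F p (r + 1)) :
    ∃ l : ZMod p, ∀ W : Submodule F (Fin (r + 1) → F), 2 ≤ finrank F W →
      ∑ᶠ P ∈ pointsIn F (r + 1) W, c P = l := by
  unfold hypCode at hc
  induction hc using Submodule.span_induction with
  | mem x hx =>
    obtain ⟨H, hH, rfl⟩ := hx
    refine ⟨1, fun W hW => ?_⟩
    have hf : 1 ≤ finrank F (H ⊓ W : Submodule F _) := by
      have h1 := Submodule.finrank_sup_add_finrank_inf_eq H W
      have h2 := Submodule.finrank_le (H ⊔ W)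
      rw [Module.finrank_fin_fun] at h2
      omega
    rw [← card_points_mod' hp _ hf]
    unfold charVec secant
    rw [finsum_mem_def]
    simp_rw [Set.indicator_indicator]
    rw [Set.univ_inter, ← finsum_mem_def]
    have : pointsIn F (r + 1) W ∩ pointsIn F (r + 1) H = pointsIn F (r + 1) (H ⊓ W) := by
      ext P
      simp only [pointsIn, Set.mem_inter_iff, Set.mem_ofPred_eq, le_inf_iff]
      tauto
    rw [this, finsum_mem_eq_finite_toFinset_sum _ (Set.toFinite _)]
    simp [Set.ncard_eq_toFinset_card _ (Set.toFinite _)]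
  | zero => exact ⟨0, fun W _ => by simp⟩
  | add x y _ _ hx hy =>
    obtain ⟨l, hl⟩ := hx
    obtain ⟨m, hm⟩ := hy
    refine ⟨l + m, fun W hW => ?_⟩
    rw [← hl W hW, ← hm W hW, ← finsum_mem_add_distrib (Set.toFinite _)]
    rfl
  | smul a x _ hx =>
    obtain ⟨l, hl⟩ := hx
    refine ⟨a * l, fun W hW => ?_⟩
    rw [← hl W hW, mul_finsum_mem' _ _ (Set.toFinite _)]
    rfl

lemma charVec_sum {p : ℕ} (V : Set (ProjPoint F (r + 1))) (W : Submodule F (Fin (r + 1) → F)) :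
    ∑ᶠ P ∈ pointsIn F (r + 1) W, charVec F p (r + 1) V P = secant F (r + 1) V W := by
  unfold charVec secant
  rw [finsum_mem_def]
  simp_rw [Set.indicator_indicator]
  rw [← finsum_mem_def, Set.inter_comm, finsum_mem_eq_finite_toFinset_sum _ (Set.toFinite _)]
  simp [Set.ncard_eq_toFinset_card _ (Set.toFinite _)]

lemma code_moments {p : ℕ} [Fact p.Prime] [CharP F p]
    {e₀ e₁ e₂ : Fin (r + 1) → F}
    (h0 : e₀ ∉ span F {e₂} ⊔ span F {e₁}) (k : ℕ) (hk : k < Fintype.card F - 1)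
    (c : ProjPoint F (r + 1) → ZMod p) (hc : c ∈ hypCode F p (r + 1)) :
    ∃ S : Polynomial F, S.natDegree ≤ k ∧ ∀ x : F,
      ∑ y : F, ZMod.castHom dvd_rfl F (c (pt (e₀ + x • e₁ + y • e₂))) * y ^ k = S.eval x := by
  classical
  unfold hypCode at hc
  induction hc using Submodule.span_induction with
  | mem x hx =>
    obtain ⟨H, hH, rfl⟩ := hx
    have hlt : H < ⊤ := by
      rw [lt_top_iff_ne_top]
      rintro rfl
      rw [finrank_top, Module.finrank_fin_fun] at hH
      omega
    obtain ⟨φ, hφ, hle⟩ := Submodule.exists_le_ker_of_lt_top H hlt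
    have hker : H = LinearMap.ker φ := by
      apply Submodule.eq_of_le_of_finrank_eq hle
      have := Module.Dual.finrank_ker_add_one_of_ne_zero hφ
      rw [Module.finrank_fin_fun] at this
      omega
    have hval : ∀ x y : F, ZMod.castHom (dvd_refl p) F (charVec F p (r + 1) (pointsIn F (r + 1) H)
        (pt (e₀ + x • e₁ + y • e₂))) = if φ e₀ + x * φ e₁ + y * φ e₂ = 0 then 1 else 0 := by
      intro x y
      have hne : e₀ + x • e₁ + y • e₂ ≠ 0 := by
        rw [add_assoc]
        exact add_ne h0 (add_mem (mem_sup_right (mem_span_singleton.mpr ⟨_, rfl⟩))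
          (mem_sup_left (mem_span_singleton.mpr ⟨_, rfl⟩)))
      have hiff : pt (e₀ + x • e₁ + y • e₂) ∈ pointsIn F (r + 1) H ↔
          φ e₀ + x * φ e₁ + y * φ e₂ = 0 := by
        rw [pt_mem hne, hker, LinearMap.mem_ker]; simp
      unfold charVec
      rw [Set.indicator_apply]
      simp only [hiff]
      split_ifs <;> simp
    simp_rw [hval]
    by_cases hd : φ e₂ = 0
    · refine ⟨0, by simp, fun x => ?_⟩
      simp only [hd, mul_zero, add_zero, ← Finset.mul_sum,
        FiniteField.sum_pow_lt_card_sub_one F k hk, Polynomial.eval_zero]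
    · refine ⟨(Polynomial.C (-(φ e₀) / φ e₂) + Polynomial.C (-(φ e₁) / φ e₂) * Polynomial.X) ^ k,
        ?_, fun x => ?_⟩
      · refine (Polynomial.natDegree_pow_le_of_le (m := 1) k ?_).trans (by simp)
        compute_degree
      · rw [Finset.sum_eq_single (-(φ e₀) / φ e₂ + -(φ e₁) / φ e₂ * x)]
        · rw [if_pos (by field_simp; ring)]; simp
        · intro y _ hy
          rw [if_neg, zero_mul]
          intro h
          apply hy
          field_simp
          linear_combination h
        · simp
  | zero => exact ⟨0, by simp, fun x => by simp⟩
  | add a b _ _ ha hb =>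
    obtain ⟨S, hS, hS'⟩ := ha
    obtain ⟨T, hT, hT'⟩ := hb
    refine ⟨S + T, Polynomial.natDegree_add_le_of_degree_le hS hT, fun x => ?_⟩
    rw [Polynomial.eval_add, ← hS', ← hT', ← Finset.sum_add_distrib]
    exact Finset.sum_congr rfl fun y _ => by rw [Pi.add_apply, map_add, add_mul]
  | smul a b _ hb =>
    obtain ⟨S, hS, hS'⟩ := hb
    refine ⟨Polynomial.C (ZMod.castHom dvd_rfl F a) * S,
      (Polynomial.natDegree_C_mul_le _ _).trans hS, fun x => ?_⟩
    rw [Polynomial.eval_mul, Polynomial.eval_C, ← hS', Finset.mul_sum]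
    exact Finset.sum_congr rfl fun y _ => by rw [Pi.smul_apply, smul_eq_mul, map_mul, mul_assoc]

lemma compl_moments {p : ℕ} [Fact p.Prime] [CharP F p] (V : Set (ProjPoint F (r + 1)))
    [DecidablePred (· ∈ V)] (hcode : charVec F p (r + 1) V ∈ hypCode F p (r + 1))
    {e₀ e₁ e₂ : Fin (r + 1) → F}
    (h0 : e₀ ∉ span F {e₂} ⊔ span F {e₁}) (k : ℕ) (hk : k < Fintype.card F - 1) :
    ∃ S : Polynomial F, S.natDegree ≤ k ∧ ∀ x : F,
      ∑ y : F, (if pt (e₀ + x • e₁ + y • e₂) ∈ V then (0 : F) else 1) * y ^ k = S.eval x := by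
  obtain ⟨S, hS, h⟩ := code_moments h0 k hk _ hcode
  refine ⟨-S, by rwa [Polynomial.natDegree_neg], fun x => ?_⟩
  have e : -Polynomial.eval x S = ∑ y : F, y ^ k - Polynomial.eval x S := by
    rw [FiniteField.sum_pow_lt_card_sub_one F k hk, zero_sub]
  rw [Polynomial.eval_neg, e, ← h x, ← Finset.sum_sub_distrib]
  refine Finset.sum_congr rfl fun y _ => ?_
  unfold charVec
  rw [Set.indicator_apply]
  split_ifs <;> simp

lemma K1 {p : ℕ} [Fact p.Prime] [CharP F p] (V : Set (ProjPoint F (r + 1)))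
    (hcode : charVec F p (r + 1) V ∈ hypCode F p (r + 1))
    {e₀ e₁ e₂ : Fin (r + 1) → F} (h2 : e₂ ≠ 0) (h1 : e₁ ∉ span F {e₂})
    (h0' : e₀ ∉ span F {e₂})
    (h0 : e₀ ∉ span F {e₂} ⊔ span F {e₁}) (hV : pt e₂ ∈ V)
    (hs : 2 * secant F (r + 1) Vᶜ (span F {e₂} ⊔ span F {e₀}) ≤ Fintype.card F) :
    Fintype.card F * secant F (r + 1) Vᶜ (span F {e₂} ⊔ span F {e₀}) ≤
      secant F (r + 1) Vᶜ (span F {e₂} ⊔ span F {e₁} ⊔ span F {e₀}) +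
      secant F (r + 1) Vᶜ (span F {e₂} ⊔ span F {e₀}) *
        (secant F (r + 1) Vᶜ (span F {e₂} ⊔ span F {e₀}) - 1) := by
  classical
  have key := key_lemma (fun x y : F => if pt (e₀ + x • e₁ + y • e₂) ∈ V then (0 : F) else 1)
    (secant F (r + 1) Vᶜ (span F {e₂} ⊔ span F {e₀}))
    (fun k hk => compl_moments V hcode h0 k hk)
    (by
      rw [secant_line Vᶜ h2 h0', if_neg (by simpa using hV), zero_add]
      congr 1
      ext y
      simp) hs
  refine key.trans (Nat.add_le_add_right ?_ _)
  rw [secant_plane Vᶜ h2 h1 h0]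
  refine le_trans (le_of_eq ?_) (Nat.le_add_left _ _)
  refine Finset.sum_congr rfl fun x _ => ?_
  congr 1
  ext y
  simp

lemma K2 {p : ℕ} [Fact p.Prime] [CharP F p] (V : Set (ProjPoint F (r + 1)))
    (hcode : charVec F p (r + 1) V ∈ hypCode F p (r + 1))
    {e₀ e₁ e₂ : Fin (r + 1) → F} (h2 : e₂ ≠ 0) (h1 : e₁ ∉ span F {e₂})
    (h0' : e₀ ∉ span F {e₂})
    (h0 : e₀ ∉ span F {e₂} ⊔ span F {e₁}) (hV : pt e₂ ∉ V) (s : ℕ)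
    (hs' : s + secant F (r + 1) Vᶜ (span F {e₂} ⊔ span F {e₀}) = Fintype.card F + 1)
    (hs : 2 * s ≤ Fintype.card F) :
    Fintype.card F * s + secant F (r + 1) Vᶜ (span F {e₂} ⊔ span F {e₀}) ≤
      secant F (r + 1) Vᶜ (span F {e₂} ⊔ span F {e₁} ⊔ span F {e₀}) + s * (s - 1) + s := by
  classical
  set n : F → ℕ := fun x =>
    (Finset.univ.filter fun y : F => pt (e₀ + x • e₁ + y • e₂) ∈ Vᶜ).card with hn
  set c : F → F → F := fun x y : F =>
    (if pt (e₀ + x • e₁ + y • e₂) ∈ V then (0 : F) else 1) - (if x = 0 then 1 else 0) with hc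
  have hb : secant F (r + 1) Vᶜ (span F {e₂} ⊔ span F {e₀}) = 1 + n 0 := by
    rw [secant_line Vᶜ h2 h0', if_pos (by simpa using hV)]
    simp [hn]
  have hn0 : (Finset.univ.filter fun y => c 0 y ≠ 0).card = s := by
    have h3 : (Finset.univ.filter fun y => c 0 y ≠ 0) =
        Finset.univ.filter fun y : F => ¬ pt (e₀ + (0 : F) • e₁ + y • e₂) ∈ Vᶜ := by
      ext y
      simp only [hc, Finset.mem_filter, Finset.mem_univ, true_and, if_true, Set.mem_compl_iff,
        not_not]
      split_ifs with h
      · simpa using h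
      · simpa using h
    have h4 := Finset.card_filter_add_card_filter_not (s := (Finset.univ : Finset F))
      (fun y : F => pt (e₀ + (0 : F) • e₁ + y • e₂) ∈ Vᶜ)
    rw [← h3, Finset.card_univ] at h4
    have h5 : n 0 + (Finset.univ.filter fun y => c 0 y ≠ 0).card = Fintype.card F := h4
    omega
  have hnx : ∀ x, x ≠ 0 → (Finset.univ.filter fun y => c x y ≠ 0).card = n x := by
    intro x hx
    rw [hn]
    congr 1
    ext y
    simp [hc, hx]
  have key := key_lemma c s (fun k hk => by
      obtain ⟨S, hS, h⟩ := compl_moments V hcode h0 k hk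
      refine ⟨S, hS, fun x => ?_⟩
      rw [← h x]
      simp only [hc, sub_mul]
      rw [Finset.sum_sub_distrib, ← Finset.mul_sum,
        FiniteField.sum_pow_lt_card_sub_one F k hk, mul_zero, sub_zero]) hn0 hs
  have hpl := secant_plane Vᶜ h2 h1 h0
  have hinf := secant_line Vᶜ h2 h1
  rw [if_pos (by simpa using hV)] at hinf
  have e1 : ∑ x, (Finset.univ.filter fun y => c x y ≠ 0).card =
      s + ∑ x ∈ Finset.univ.erase (0 : F), n x := by
    rw [← Finset.add_sum_erase _ _ (Finset.mem_univ (0 : F)), hn0]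
    congr 1
    exact Finset.sum_congr rfl fun x hx => hnx x (Finset.ne_of_mem_erase hx)
  have e2 : ∑ x, n x = n 0 + ∑ x ∈ Finset.univ.erase (0 : F), n x :=
    (Finset.add_sum_erase _ _ (Finset.mem_univ (0 : F))).symm
  have hpl' : secant F (r + 1) Vᶜ (span F {e₂} ⊔ span F {e₁} ⊔ span F {e₀}) =
    secant F (r + 1) Vᶜ (span F {e₂} ⊔ span F {e₁}) + ∑ x, n x := hpl
  omega

/-- Choice of a frame adapted to a line of a plane and a point on it. -/
lemma frame {π l : Submodule F (Fin (r + 1) → F)} (hl : l ≤ π) (hl2 : finrank F l = 2)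
    (hπ : finrank F π = 3) {g : Fin (r + 1) → F} (hg : g ≠ 0) (hgl : g ∈ l) :
    ∃ e₀ e₁ : Fin (r + 1) → F, e₁ ∉ span F {g} ∧ e₀ ∉ span F {g} ∧
      e₀ ∉ span F {g} ⊔ span F {e₁} ∧ span F {g} ⊔ span F {e₀} = l ∧
      span F {g} ⊔ span F {e₁} ⊔ span F {e₀} = π := by
  have hg1 : finrank F (span F {g}) = 1 := finrank_span_singleton hg
  have hgle : span F {g} ≤ l := (span_singleton_le_iff_mem _ _).mpr hgl
  obtain ⟨e₀, he₀, he₀'⟩ := exists_notMem_of_finrank_lt (W₀ := span F {g}) (W := l) (by omega)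
  obtain ⟨e₁, he₁, he₁'⟩ := exists_notMem_of_finrank_lt (W₀ := l) (W := π) (by omega)
  have h1 : e₁ ∉ span F {g} := fun h => he₁' (hgle h)
  have h0 : e₀ ∉ span F {g} ⊔ span F {e₁} := by
    intro h
    obtain ⟨w, hw, z, hz, hwz⟩ := mem_sup.mp h
    obtain ⟨a, rfl⟩ := mem_span_singleton.mp hz
    by_cases ha : a = 0
    · apply he₀'
      rw [← hwz, ha, zero_smul, add_zero]
      exact hw
    · apply he₁'
      rw [← l.smul_mem_iff ha, ← l.add_mem_iff_right (hgle hw), hwz]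
      exact he₀
  refine ⟨e₀, e₁, h1, he₀', h0, sup_eq_of_finrank hgle he₀ he₀' (by omega), ?_⟩
  apply sup_eq_of_finrank _ (hl he₀) h0
  · rw [finrank_sup_span_singleton h1]; omega
  · exact sup_le (hgle.trans hl) ((span_singleton_le_iff_mem _ _).mpr he₁)

lemma card_line {l : Submodule F (Fin (r + 1) → F)} (hl2 : finrank F l = 2) :
    secant F (r + 1) Set.univ l = Fintype.card F + 1 := by
  classical
  obtain ⟨g, hg, hg'⟩ := exists_notMem_of_finrank_lt (W₀ := ⊥) (W := l) (by simp; omega)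
  have hg0 : g ≠ 0 := by simpa using hg'
  have hg1 : finrank F (span F {g}) = 1 := finrank_span_singleton hg0
  obtain ⟨e₀, he₀, he₀'⟩ := exists_notMem_of_finrank_lt (W₀ := span F {g}) (W := l) (by omega)
  rw [← sup_eq_of_finrank ((span_singleton_le_iff_mem _ _).mpr hg) he₀ he₀' (by omega),
    secant_line _ hg0 he₀']
  simp [add_comm]

lemma card_plane {π : Submodule F (Fin (r + 1) → F)} (hπ : finrank F π = 3) :
    secant F (r + 1) Set.univ π = Fintype.card F ^ 2 + Fintype.card F + 1 := by
  classical
  obtain ⟨g, hg, hg'⟩ := exists_notMem_of_finrank_lt (W₀ := ⊥) (W := π) (by simp; omega)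
  have hg0 : g ≠ 0 := by simpa using hg'
  have hg1 : finrank F (span F {g}) = 1 := finrank_span_singleton hg0
  obtain ⟨e₁, he₁, he₁'⟩ := exists_notMem_of_finrank_lt (W₀ := span F {g}) (W := π) (by omega)
  have h2 : finrank F (span F {g} ⊔ span F {e₁} : Submodule F _) = 2 := by
    rw [finrank_sup_span_singleton he₁', hg1]
  obtain ⟨e₀, he₀, he₀'⟩ := exists_notMem_of_finrank_lt
    (W₀ := span F {g} ⊔ span F {e₁}) (W := π) (by omega)
  rw [← sup_eq_of_finrank (W := π) (sup_le ((span_singleton_le_iff_mem _ _).mpr hg)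
    ((span_singleton_le_iff_mem _ _).mpr he₁)) he₀ he₀' (by omega),
    secant_plane _ hg0 he₁' he₀', card_line h2]
  simp
  ring

lemma arith1 {p Q s b : ℕ} (hp : 3 < p) (hQ : Q = p ^ 4) (h2 : 2 * p ≤ s) (hs : 2 * s ≤ Q)
    (hb : b ≤ p * Q + p) (h : Q * s ≤ b + s * (s - 1)) : False := by
  have hQp : 25 * p ≤ Q := by
    rw [hQ]; have : p ^ 4 = (p * p * p) * p := by ring
    rw [this]; exact Nat.mul_le_mul_right _ (by nlinarith)
  obtain ⟨s, rfl⟩ : ∃ t, s = t + 1 := ⟨s - 1, by omega⟩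
  simp only [Nat.add_sub_cancel] at h
  zify at *
  nlinarith [mul_nonneg (sub_nonneg.mpr h2) (show (0 : ℤ) ≤ Q + 1 - (s + 1) - 2 * p by linarith)]

lemma arith2 {p Q s b t : ℕ} (hp : 3 < p) (hQ : Q = p ^ 4) (h2 : p + 1 ≤ s) (hs : 2 * s ≤ Q)
    (hst : s + t = Q + 1)
    (hb : b ≤ p * Q + p) (h : Q * s + t ≤ b + s * (s - 1) + s) : False := by
  have hQp : 16 * (p * p) ≤ Q := by
    rw [hQ]; have : p ^ 4 = (p * p) * (p * p) := by ring
    rw [this]; exact Nat.mul_le_mul_right _ (by nlinarith)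
  obtain ⟨s, rfl⟩ : ∃ t, s = t + 1 := ⟨s - 1, by omega⟩
  simp only [Nat.add_sub_cancel] at h
  have hpp : 4 * p ≤ p * p := Nat.mul_le_mul_right _ hp
  zify at *
  nlinarith [mul_nonneg (sub_nonneg.mpr h2) (show (0 : ℤ) ≤ Q + 1 - (s + 1) - 2 * p by linarith)]

end geometry
/-- in PG(r, p⁴) (so `q = p²`), if a plane `π` meets `V` in at least
`p⁸ - p⁵ + p⁴ - p + 1` points, then either `π ⊆ V`, or `|π ∩ V| = p⁸ - p⁵ + p⁴ + 1`
and every line of `π` meets `π ∩ V` in `1`, `p⁴ - p + 1` or `p⁴ + 1` points. -/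
theorem stmt17 (p r : ℕ) (hp : p.Prime) (hp3 : 3 < p) (hr : 4 ≤ r)
    (F : Type) [Field F] [Fintype F] (hF : Fintype.card F = p ^ 4)
    (V : Set (ProjPoint F (r + 1))) (hV : IsQuasiHermitian F (p ^ 2) r V)
    (hcode : charVec F p (r + 1) V ∈ hypCode F p (r + 1))
    (π : Submodule F (Fin (r + 1) → F)) (hπ : finrank F π = 3)
    (hsize : p ^ 8 - p ^ 5 + p ^ 4 - p + 1 ≤ secant F (r + 1) V π) :
    pointsIn F (r + 1) π ⊆ V ∨
    (secant F (r + 1) V π = p ^ 8 - p ^ 5 + p ^ 4 + 1 ∧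
      ∀ ℓ : Submodule F (Fin (r + 1) → F), ℓ ≤ π → finrank F ℓ = 2 →
        secant F (r + 1) V ℓ = 1 ∨ secant F (r + 1) V ℓ = p ^ 4 - p + 1 ∨
          secant F (r + 1) V ℓ = p ^ 4 + 1) := by
  classical
  have hpf : Fact p.Prime := ⟨hp⟩
  have hchar : CharP F p := by
    obtain ⟨p', hp', n, hp'', hcard⟩ := FiniteField.card' F
    have hdvd : p' ∣ p ^ 4 := by
      rw [← hF, hcard]; exact dvd_pow_self _ n.ne_zero
    have := (Nat.prime_dvd_prime_iff_eq hp'' hp).mp (hp''.dvd_of_dvd_pow hdvd)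
    rwa [← this]
  set Q := Fintype.card F with hQdef
  have hpQ : p ∣ Q := by rw [hF]; exact dvd_pow_self _ (by norm_num)
  have hQp : 16 * (p * p) ≤ Q := by
    rw [hF]; have : p ^ 4 = (p * p) * (p * p) := by ring
    rw [this]; exact Nat.mul_le_mul_right _ (by nlinarith)
  have hpp : 4 * p ≤ p * p := Nat.mul_le_mul_right _ hp3
  -- all subspaces of vector dimension at least two meet `V` in `1 mod p` points
  obtain ⟨c, hc⟩ := code_const hpQ _ hcode
  have hc1 : c = 1 := by
    have h1 := hc ⊤ (by rw [finrank_top, Module.finrank_fin_fun]; omega)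
    rw [charVec_sum] at h1
    have h2 : secant F (r + 1) V ⊤ = V.ncard := by
      unfold secant
      congr 1
      ext P
      simp [pointsIn]
    have h3 := congrArg (Int.cast : ℤ → ZMod p) hV.1
    push_cast at h3
    rw [ZMod.natCast_self, ← h2, h1] at h3
    have h4 : ((-1 : ZMod p) ^ r) * (-1) ^ r = 1 := by
      rw [← mul_pow]; simp
    rw [zero_pow (by norm_num : (2 : ℕ) ≠ 0), zero_pow (by norm_num : (2 : ℕ) ≠ 0),
      zero_pow (by omega : r + 1 ≠ 0), zero_pow (by omega : r ≠ 0)] at h3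
    linear_combination (-1 : ZMod p) * h3 + h4
  have hline : ∀ l : Submodule F (Fin (r + 1) → F), finrank F l = 2 →
      secant F (r + 1) V l + secant F (r + 1) Vᶜ l = Q + 1 ∧ p ∣ secant F (r + 1) Vᶜ l := by
    intro l hl
    have h1 := secant_add_compl V l
    rw [card_line hl] at h1
    refine ⟨h1, ?_⟩
    have h2 := hc l hl.ge
    rw [charVec_sum, hc1] at h2
    rw [← ZMod.natCast_eq_zero_iff]
    have h3 := congrArg (Nat.cast : ℕ → ZMod p) h1
    push_cast at h3
    rw [h2, (ZMod.natCast_eq_zero_iff _ _).mpr hpQ] at h3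
    linear_combination h3
  have hplane := secant_add_compl V π
  rw [card_plane hπ] at hplane
  set b := secant F (r + 1) Vᶜ π with hbdef
  have hQ2 : Q ^ 2 = p ^ 8 := by rw [hF]; ring
  have hQp5 : p * Q = p ^ 5 := by rw [hF]; ring
  have h58 : p ^ 5 ≤ p ^ 8 := Nat.pow_le_pow_right hp.pos (by norm_num)
  have h14 : p ≤ p ^ 4 := Nat.le_self_pow (by norm_num) p
  have hbub : b ≤ p * Q + p := by
    rw [hQp5]; rw [hQ2] at hplane
    omega
  -- line types
  have htypes : ∀ l ≤ π, finrank F l = 2 → secant F (r + 1) Vᶜ l = 0 ∨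
      secant F (r + 1) Vᶜ l = p ∨ secant F (r + 1) Vᶜ l = Q := by
    intro l hlπ hl
    obtain ⟨hsum, k, hk⟩ := hline l hl
    obtain ⟨m, hm⟩ := hpQ
    by_cases hsm : 2 * secant F (r + 1) Vᶜ l ≤ Q
    · by_cases hk2 : k < 2
      · interval_cases k
        · left; simpa using hk
        · right; left; simpa using hk
      · exfalso
        have h2p : 2 * p ≤ secant F (r + 1) Vᶜ l := by
          rw [hk, mul_comm]; exact Nat.mul_le_mul_left _ (by omega)
        have hne : (V ∩ pointsIn F (r + 1) l).Nonempty := by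
          rw [← Set.ncard_pos (Set.toFinite _)]
          change 0 < secant F (r + 1) V l
          omega
        obtain ⟨P, hPV, hPl⟩ := hne
        obtain ⟨g, hg, rfl⟩ := exists_pt P
        rw [pt_mem hg] at hPl
        obtain ⟨e₀, e₁, h1, h0', h0, hl', hπ'⟩ := frame hlπ hl hπ hg hPl
        have hK := K1 V hcode hg h1 h0' h0 hPV (by rw [hl']; exact hsm)
        rw [hl', hπ'] at hK
        exact arith1 hp3 hF h2p hsm hbub hK
    · right; right
      have hpos : 0 < secant F (r + 1) Vᶜ l := by omega
      obtain ⟨P, hPV, hPl⟩ := (Set.ncard_pos (Set.toFinite _)).mp hpos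
      obtain ⟨g, hg, rfl⟩ := exists_pt P
      rw [pt_mem hg] at hPl
      obtain ⟨e₀, e₁, h1, h0', h0, hl', hπ'⟩ := frame hlπ hl hπ hg hPl
      have hkm : k ≤ m := by
        by_contra hcon
        have : p * (m + 1) ≤ p * k := Nat.mul_le_mul_left _ (by omega)
        rw [mul_add, mul_one, ← hm, ← hk] at this
        omega
      obtain ⟨d, rfl⟩ := Nat.exists_eq_add_of_le hkm
      have hVl : secant F (r + 1) V l = p * d + 1 := by
        rw [mul_add] at hm
        omega
      rcases Nat.eq_zero_or_pos d with rfl | hd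
      · omega
      · exfalso
        have hge : p + 1 ≤ secant F (r + 1) V l := by
          rw [hVl]
          have : p * 1 ≤ p * d := Nat.mul_le_mul_left _ hd
          omega
        have h2s : 2 * secant F (r + 1) V l ≤ Q := by
          by_contra hcon
          have he : 2 * secant F (r + 1) V l = Q + 1 := by omega
          have : p ∣ 1 := by
            have h5 : 2 * (p * d) + 1 = Q := by omega
            rw [hm] at h5
            exact (Nat.dvd_add_right (Dvd.intro (2 * d) (by ring) : p ∣ 2 * (p * d))).mp
              (h5 ▸ Dvd.intro _ rfl)
          exact hp.one_lt.ne' (Nat.dvd_one.mp this)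
        have hK := K2 V hcode hg h1 h0' h0 hPV (secant F (r + 1) V l)
          (by rw [hl']; exact hsum) h2s
        rw [hl', hπ'] at hK
        exact arith2 hp3 hF hge h2s hsum hbub hK
  by_cases hsub : pointsIn F (r + 1) π ⊆ V
  · exact Or.inl hsub
  right
  -- it suffices to determine the size of the complement
  suffices hb : b = p * Q by
    refine ⟨?_, fun l hlπ hl => ?_⟩
    · rw [hQ2, hb, hQp5, ← hQdef, hF] at hplane
      omega
    · have h1 := (hline l hl).1
      rw [← hF]
      rcases htypes l hlπ hl with h | h | h <;> rw [h] at h1 <;> omega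
  obtain ⟨P, hPπ, hPV⟩ := Set.not_subset.mp hsub
  obtain ⟨g, hg, rfl⟩ := exists_pt P
  rw [pt_mem hg] at hPπ
  have hg1 : finrank F (Submodule.span F {g}) = 1 := finrank_span_singleton hg
  -- the pencil of lines through the point, starting from a given line
  have pencil : ∀ l ≤ π, finrank F l = 2 → g ∈ l → ∃ n : F → ℕ,
      b = secant F (r + 1) Vᶜ l + ∑ x, n x ∧
      ∀ x, ∃ m ≤ π, finrank F m = 2 ∧ g ∈ m ∧ secant F (r + 1) Vᶜ m = n x + 1 := by
    intro l hlπ hl hgl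
    have hgle : Submodule.span F {g} ≤ l := (Submodule.span_singleton_le_iff_mem _ _).mpr hgl
    obtain ⟨e₁, he₁, he₁'⟩ := exists_notMem_of_finrank_lt (W₀ := Submodule.span F {g}) (W := l)
      (by omega)
    obtain ⟨e₀, he₀, he₀'⟩ := exists_notMem_of_finrank_lt (W₀ := l) (W := π) (by omega)
    have hl' := sup_eq_of_finrank hgle he₁ he₁' (by omega)
    have hπ' := sup_eq_of_finrank hlπ he₀ he₀' (by omega)
    have h := secant_plane Vᶜ hg he₁' (hl'.symm ▸ he₀')
    rw [hl', hπ'] at h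
    refine ⟨_, h, fun x => ?_⟩
    have hx : e₀ + x • e₁ ∉ Submodule.span F {g} := fun hx =>
      add_notMem he₀' (l.smul_mem x he₁) (hgle hx)
    refine ⟨Submodule.span F {g} ⊔ Submodule.span F {e₀ + x • e₁}, ?_, ?_, ?_, ?_⟩
    · refine sup_le (hgle.trans hlπ) ((Submodule.span_singleton_le_iff_mem _ _).mpr ?_)
      exact add_mem he₀ (hlπ (l.smul_mem x he₁))
    · rw [Submodule.finrank_sup_span_singleton hx, hg1]
    · exact Submodule.mem_sup_left (Submodule.mem_span_singleton_self g)
    · rw [secant_line Vᶜ hg hx, if_pos (show pt g ∈ Vᶜ from hPV), add_comm]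
  have hposl : ∀ m : Submodule F (Fin (r + 1) → F), g ∈ m → secant F (r + 1) Vᶜ m ≠ 0 := by
    intro m hm h0
    have : pt g ∈ Vᶜ ∩ pointsIn F (r + 1) m := ⟨hPV, (pt_mem hg m).mpr hm⟩
    exact (Set.ncard_ne_zero_of_mem this (Set.toFinite _)) h0
  have hpQ' : p * Q = Q + (p - 1) * Q := by
    obtain ⟨q, rfl⟩ : ∃ q, p = q + 1 := ⟨p - 1, by omega⟩
    simp; ring
  by_cases hex : ∃ l ≤ π, finrank F l = 2 ∧ g ∈ l ∧ secant F (r + 1) Vᶜ l = Q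
  · obtain ⟨l, hlπ, hl, hgl, hlQ⟩ := hex
    obtain ⟨n, hbn, hn⟩ := pencil l hlπ hl hgl
    rw [hlQ] at hbn
    have hn' : ∀ x, n x = p - 1 ∨ n x = Q - 1 := by
      intro x
      obtain ⟨m, hmπ, hm, hgm, hmn⟩ := hn x
      have := hposl m hgm
      rcases htypes m hmπ hm with h | h | h <;> omega
    have hall : ∀ x, n x = p - 1 := by
      intro x₀
      by_contra hne
      have hx₀ := (hn' x₀).resolve_left hne
      have h1 : ∑ x, ((p - 1) + if x = x₀ then Q - p else 0) ≤ ∑ x, n x := by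
        refine Finset.sum_le_sum fun x _ => ?_
        split_ifs with hxx
        · rw [hxx, hx₀]; omega
        · rcases hn' x with h | h <;> omega
      rw [Finset.sum_add_distrib] at h1
      simp only [Finset.sum_const, Finset.sum_ite_eq', Finset.mem_univ, if_true, smul_eq_mul,
        Finset.card_univ] at h1
      rw [← hQdef, mul_comm] at h1
      omega
    rw [hbn, Finset.sum_congr rfl fun x _ => hall x, Finset.sum_const, Finset.card_univ,
      smul_eq_mul, hpQ', ← hQdef, mul_comm Q]
  · exfalso
    push Not at hex
    obtain ⟨e₁, he₁, he₁'⟩ := exists_notMem_of_finrank_lt (W₀ := Submodule.span F {g}) (W := π)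
      (by omega)
    set l := Submodule.span F {g} ⊔ Submodule.span F {e₁} with hldef
    have hl : finrank F l = 2 := by rw [hldef, Submodule.finrank_sup_span_singleton he₁', hg1]
    have hlπ : l ≤ π := sup_le ((Submodule.span_singleton_le_iff_mem _ _).mpr hPπ)
      ((Submodule.span_singleton_le_iff_mem _ _).mpr he₁)
    have hgl : g ∈ l := Submodule.mem_sup_left (Submodule.mem_span_singleton_self g)
    obtain ⟨n, hbn, hn⟩ := pencil l hlπ hl hgl
    have hlp : secant F (r + 1) Vᶜ l = p := by
      have := hposl l hgl
      have := hex l hlπ hl hgl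
      rcases htypes l hlπ hl with h | h | h
      · omega
      · exact h
      · omega
    have hall : ∀ x, n x = p - 1 := by
      intro x
      obtain ⟨m, hmπ, hm, hgm, hmn⟩ := hn x
      have := hposl m hgm
      have := hex m hmπ hm hgm
      rcases htypes m hmπ hm with h | h | h <;> omega
    rw [hlp, Finset.sum_congr rfl fun x _ => hall x, Finset.sum_const, Finset.card_univ,
      smul_eq_mul, ← hQdef, mul_comm Q] at hbn
    have hsum := (hline l hl).1
    have hne : (V ∩ pointsIn F (r + 1) l).Nonempty := by
      rw [← Set.ncard_pos (Set.toFinite _)]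
      change 0 < secant F (r + 1) V l
      omega
    obtain ⟨R, hRV, hRl⟩ := hne
    obtain ⟨g', hg', rfl⟩ := exists_pt R
    rw [pt_mem hg'] at hRl
    obtain ⟨f₀, f₁, h1, h0', h0, hl', hπ'⟩ := frame hlπ hl hπ hg' hRl
    have hK := K1 V hcode hg' h1 h0' h0 hRV (by rw [hl', hlp]; omega)
    rw [hl', hπ', hlp] at hK
    have h6 : p * (p - 1) ≤ p * p := Nat.mul_le_mul_left _ (by omega)
    have h7 : Q * p ≤ b + p * (p - 1) := hK
    rw [mul_comm Q p] at h7
    omega
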